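/- arXiv:2506.24089 — 3 statements merged into one kernel-verified Lean document; each statement's English description precedes it below -/
import Mathlib

section
/- Let p be a prime, A a d×d matrix over ℤ_p, and E a d×d matrix over ℤ_p such that for every k ≥ 1 there exists N with A^{n!} ≡ E entrywise modulo p^k for all n ≥ N. Let λ ∈ ℤ_p, m ≥ 1 an integer, and v ∈ ℤ_p^d with (A − λ·I)^m v = 0. If λ is a unit of ℤ_p (equivalently ‖λ‖_p = 1) then E·v = v, and if λ is not a unit of ℤ_p (equivalently ‖λ‖_p < 1) then E·v = 0. -/
/-!
Let `J ⊆ R[X]` be the kernel of `f ↦ f(λ) mod I`, so `J = I R[X] + (X - λ)`. A polynomial in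
`J ^ (k + m)` lies in `I ^ k R[X] + ((X - λ) ^ m)`, hence at `X = T` it maps
`ker (T - λ) ^ m` into `I ^ k M`. If `R ⧸ I` is finite, some power of `λ` is congruent mod `I` to
an idempotent `e`, with `e = 1` for a unit and `e = 0` for a nilpotent, so `X ^ c ≡ e` mod `J`.
Raising to powers of `q = #(R ⧸ I) ∈ J` improves this to `X ^ n! ≡ e` mod `J ^ (k + m)` for large
`n`, that is, `T ^ n! v ≡ e v` mod `I ^ k M`.
-/

open Filter Module Polynomial
open scoped Nat

section CommRing

variable {R : Type*} [CommRing R]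

theorem eventually_pow_factorial_sModEq_of_isIdempotentElem {J : Ideal R} {q c : ℕ} {x e : R}
    (hq : q ≠ 0) (hqJ : (q : R) ∈ J) (hc : c ≠ 0) (he : IsIdempotentElem e)
    (hx : x ^ c ≡ e [SMOD J]) (s : ℕ) :
    ∀ᶠ n in atTop, x ^ n ! ≡ e [SMOD J ^ s] := by
  have hpos : 0 < c * q ^ s := by positivity
  filter_upwards [eventually_ge_atTop (c * q ^ s)] with n hn
  obtain ⟨t, ht⟩ : c * q ^ s ∣ n ! := Nat.dvd_factorial hpos hn
  have ht0 : t ≠ 0 := right_ne_zero_of_mul (ht ▸ n.factorial_ne_zero)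
  have hpow : (x ^ c) ^ q ^ s ≡ e [SMOD J ^ s] := by
    simpa only [he.pow_eq (pow_ne_zero s hq)] using
      (SModEq.pow_pow_add_one hqJ hx s).mono (Ideal.pow_le_pow_right s.le_succ)
  simpa only [ht, pow_mul, he.pow_eq ht0] using hpow.pow t

theorem comap_evalRingHom_le_map_C_sup_span (I : Ideal R) (a : R) :
    I.comap (evalRingHom a) ≤ I.map C ⊔ Ideal.span {X - C a} := by
  intro f hf
  rw [← sub_add_cancel f (C (f.eval a))]
  exact add_mem
    (Ideal.mem_sup_right (Ideal.mem_span_singleton.2 X_sub_C_dvd_sub_C_eval))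
    (Ideal.mem_sup_left (Ideal.mem_map_of_mem C hf))

theorem mem_ideal_smul_top_of_forall_mem {ι : Type*} [Finite ι] {I : Ideal R} {x : ι → R}
    (hx : ∀ i, x i ∈ I) : x ∈ (I • ⊤ : Submodule R (ι → R)) := by
  classical
  have := Fintype.ofFinite ι
  rw [pi_eq_sum_univ' x]
  exact sum_mem fun i _ => Submodule.smul_mem_smul (hx i) trivial

theorem mulVec_sModEq_of_forall_sub_mem {m n : Type*} [Finite m] [Fintype n] {I : Ideal R}
    {A B : Matrix m n R} (h : ∀ i j, (A - B) i j ∈ I) (v : n → R) :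
    A.mulVec v ≡ B.mulVec v [SMOD (I • ⊤ : Submodule R (m → R))] := by
  rw [SModEq.sub_mem, ← Matrix.sub_mulVec]
  exact mem_ideal_smul_top_of_forall_mem fun i =>
    sum_mem fun j _ => I.mul_mem_right (v j) (h i j)

end CommRing

section Endomorphism

variable {R M : Type*} [CommRing R] [AddCommGroup M] [Module R M]
  {I : Ideal R} {T : End R M} {a : R} {v : M}

theorem aeval_apply_mem_smul_top_of_mem_map_C {f : R[X]} (hf : f ∈ I.map C) (T : End R M) (v : M) :
    aeval T f v ∈ (I • ⊤ : Submodule R M) := by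
  rw [aeval_eq_sum_range, LinearMap.sum_apply]
  exact sum_mem fun i _ => Submodule.smul_mem_smul (Ideal.mem_map_C_iff.1 hf i) trivial

theorem aeval_apply_mem_pow_smul_top {m : ℕ} (hv : v ∈ T.genEigenspace a m) {k : ℕ} {f : R[X]}
    (hf : f ∈ I.comap (evalRingHom a) ^ (k + m)) :
    aeval T f v ∈ (I ^ k • ⊤ : Submodule R M) := by
  have hf' : f ∈ (I ^ k).map C ⊔ Ideal.span {(X - C a) ^ m} := by
    rw [Ideal.map_pow, ← Ideal.span_singleton_pow]
    exact Ideal.sup_pow_add_le_pow_sup_pow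
      (Ideal.pow_right_mono (comap_evalRingHom_le_map_C_sup_span I a) _ hf)
  obtain ⟨g, hg, h, hh, rfl⟩ := Submodule.mem_sup.1 hf'
  obtain ⟨h, rfl⟩ := Ideal.mem_span_singleton'.1 hh
  have hker : aeval T ((X - C a) ^ m) v = 0 := by
    simpa [Algebra.algebraMap_eq_smul_one] using End.mem_genEigenspace_nat.1 hv
  simpa only [map_add, map_mul, LinearMap.add_apply, End.mul_apply, hker, map_zero, add_zero]
    using aeval_apply_mem_smul_top_of_mem_map_C hg T v

theorem eventually_pow_factorial_apply_sModEq (hv : v ∈ T.maxGenEigenspace a) {q c : ℕ} {e : R}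
    (hq : q ≠ 0) (hqI : (q : R) ∈ I) (hc : c ≠ 0) (he : IsIdempotentElem e)
    (ha : a ^ c ≡ e [SMOD I]) (k : ℕ) :
    ∀ᶠ n in atTop, (T ^ n !) v ≡ e • v [SMOD (I ^ k • ⊤ : Submodule R M)] := by
  obtain ⟨m, hm⟩ := (T.mem_maxGenEigenspace a v).1 hv
  have hvm : v ∈ T.genEigenspace a m := End.mem_genEigenspace_nat.2 hm
  have hX : (X : R[X]) ^ c ≡ C e [SMOD I.comap (evalRingHom a)] := by
    simpa [SModEq.sub_mem] using ha
  have hqJ : (q : R[X]) ∈ I.comap (evalRingHom a) := by simpa using hqI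
  filter_upwards [eventually_pow_factorial_sModEq_of_isIdempotentElem hq hqJ hc (he.map C) hX
    (k + m)] with n hn
  simpa [SModEq.sub_mem, Algebra.algebraMap_eq_smul_one] using
    aeval_apply_mem_pow_smul_top hvm (SModEq.sub_mem.1 hn)

theorem eq_smul_of_pow_factorial_apply_sModEq [Finite (R ⧸ I)] [IsHausdorff I M] {w : M}
    (hw : ∀ k, ∀ᶠ n in atTop, (T ^ n !) v ≡ w [SMOD (I ^ k • ⊤ : Submodule R M)])
    (hv : v ∈ T.maxGenEigenspace a) {c : ℕ} {e : R} (hc : c ≠ 0) (he : IsIdempotentElem e)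
    (ha : a ^ c ≡ e [SMOD I]) : w = e • v := by
  have hqI : (I.toAddSubgroup.index : R) ∈ I :=
    Ideal.Quotient.eq_zero_iff_mem.1 (by simpa using Ideal.Quotient.index_eq_zero I)
  have hq : I.toAddSubgroup.index ≠ 0 := (Nat.card_pos (α := R ⧸ I)).ne'
  refine (IsHausdorff.eq_iff_smodEq (I := I)).2 fun k => ?_
  obtain ⟨n, hnw, hne⟩ :=
    ((hw k).and (eventually_pow_factorial_apply_sModEq hv hq hqI hc he ha k)).exists
  exact hnw.symm.trans hne

theorem ordinary_projector_on_generalized_eigenspaces_general [Finite (R ⧸ I)] [IsHausdorff I M]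
    {w : M} (hw : ∀ k, ∀ᶠ n in atTop, (T ^ n !) v ≡ w [SMOD (I ^ k • ⊤ : Submodule R M)])
    (hv : v ∈ T.maxGenEigenspace a) :
    (IsUnit (Ideal.Quotient.mk I a) → w = v) ∧ (a ∈ I.radical → w = 0) := by
  constructor
  · rintro ⟨u, hu⟩
    have ha : a ^ Nat.card (R ⧸ I)ˣ ≡ 1 [SMOD I] := by
      rw [SModEq.idealQuotientMk, map_pow, ← hu, ← Units.val_pow_eq_pow_val, pow_card_eq_one',
        Units.val_one, map_one]
    simpa using eq_smul_of_pow_factorial_apply_sModEq hw hv Nat.card_pos.ne' .one ha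
  · rintro ⟨r, hr⟩
    have ha : a ^ (r + 1) ≡ 0 [SMOD I] := SModEq.zero.2 (I.pow_mem_of_pow_mem hr r.le_succ)
    simpa using eq_smul_of_pow_factorial_apply_sModEq hw hv r.succ_ne_zero .zero ha

end Endomorphism

section Matrix

variable {R n : Type*} [CommRing R] [Fintype n] [DecidableEq n] {A E : Matrix n n R}

theorem eventually_toLin'_pow_factorial_sModEq {I : Ideal R} {π : R} (hI : I = Ideal.span {π})
    (hconv : ∀ k : ℕ, 1 ≤ k → ∃ N : ℕ, ∀ l : ℕ, N ≤ l → ∀ i j : n,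
      π ^ k ∣ (A ^ Nat.factorial l - E) i j) (v : n → R) (k : ℕ) :
    ∀ᶠ l in atTop,
      (A.toLin' ^ l !) v ≡ E.mulVec v [SMOD (I ^ k • ⊤ : Submodule R (n → R))] := by
  obtain ⟨N, hN⟩ := hconv (k + 1) k.succ_pos
  filter_upwards [eventually_ge_atTop N] with l hl
  rw [← Matrix.toLin'_pow, Matrix.toLin'_apply, hI, Ideal.span_singleton_pow]
  exact mulVec_sModEq_of_forall_sub_mem
    (fun i j => Ideal.mem_span_singleton.2 ((pow_dvd_pow π k.le_succ).trans (hN l hl i j))) v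

theorem mem_maxGenEigenspace_toLin' {a : R} {m : ℕ} {v : n → R}
    (hv : ((A - a • (1 : Matrix n n R)) ^ m).mulVec v = 0) :
    v ∈ End.maxGenEigenspace A.toLin' a := by
  refine (End.mem_maxGenEigenspace _ _ _).2 ⟨m, ?_⟩
  rwa [End.one_eq_id, ← Matrix.toLin'_one, ← map_smul, ← map_sub, ← Matrix.toLin'_pow,
    Matrix.toLin'_apply]

end Matrix

/-- If `A ^ n!` converges entrywise `p`-adically to a matrix `E` over `ℤ_p`,
and `v` is a generalized eigenvector of `A` with eigenvalue `λ`, then `E v = v` when `λ` is a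
unit of `ℤ_p`, and `E v = 0` when `λ` is not a unit. -/
theorem ordinary_projector_on_generalized_eigenspaces
    {p : ℕ} [Fact p.Prime] {d : ℕ}
    (A E : Matrix (Fin d) (Fin d) ℤ_[p])
    (hconv : ∀ k : ℕ, 1 ≤ k → ∃ N : ℕ, ∀ n : ℕ, N ≤ n → ∀ i j : Fin d,
      (p : ℤ_[p]) ^ k ∣ (A ^ Nat.factorial n - E) i j)
    (lam : ℤ_[p]) (m : ℕ) (hm : 1 ≤ m) (v : Fin d → ℤ_[p])
    (hv : ((A - lam • (1 : Matrix (Fin d) (Fin d) ℤ_[p])) ^ m).mulVec v = 0) :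
    (IsUnit lam → E.mulVec v = v) ∧ (¬ IsUnit lam → E.mulVec v = 0) := by
  have : Finite (ℤ_[p] ⧸ IsLocalRing.maximalIdeal ℤ_[p]) :=
    inferInstanceAs (Finite (IsLocalRing.ResidueField ℤ_[p]))
  have ⟨hunit, hnil⟩ := ordinary_projector_on_generalized_eigenspaces_general
    (eventually_toLin'_pow_factorial_sModEq PadicInt.maximalIdeal_eq_span_p hconv v)
    (mem_maxGenEigenspace_toLin' hv)
  exact ⟨fun h => hunit (h.map _), fun h => hnil (Ideal.le_radical h)⟩
end

section
/- Let p be a prime and K a complete nonarchimedean normed field. Let X = ℚ_p \ {0} with the subspace topology from ℚ_p, and let χ : X → K \ {0} be a continuous map that is multiplicative: χ(xy) = χ(x)χ(y) for all x, y ∈ X. Then: (1) ‖χ(u)‖ = 1 for every u ∈ ℤ_p^× (every u ∈ ℤ_p with ‖u‖_p = 1); (2) the function f : X → K defined by f(x) = χ(x) for x ∈ ℤ_p \ {0} and f(x) = 0 for x ∉ ℤ_p is continuous; (3) f is bounded if and only if ‖χ(p)‖ ≤ 1; (4) f vanishes at infinity (for every ε > 0 there is a compact C ⊆ X with ‖f(x)‖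 ≤ ε for x ∈ X \ C) if and only if ‖χ(p)‖ < 1. -/
open scoped Classical

/-- `p` as a nonzero element of `ℚ_p`. -/
noncomputable def padicPrimeElt (p : ℕ) [Fact p.Prime] : {x : ℚ_[p] // x ≠ 0} :=
  ⟨(p : ℚ_[p]), by exact_mod_cast (Fact.out : p.Prime).ne_zero⟩

/-- The function `1_{ℤ_p} · χ : ℚ_p \ {0} → K`, equal to `χ` on `ℤ_p \ {0}` and `0`
outside `ℤ_p`. -/
noncomputable def indicatorMulChar (p : ℕ) [Fact p.Prime] {K : Type*} [NormedField K]
    (χ : {x : ℚ_[p] // x ≠ 0} → K) : {x : ℚ_[p] // x ≠ 0} → K :=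
  fun x => if ‖x.1‖ ≤ 1 then χ x else 0

/-!
Extending `χ` by zero gives a monoid-with-zero homomorphism `φ : ℚ_[p] →*₀ K`. The unit circle of
`ℚ_[p]` is a compact group, so `φ` has bounded powers there and hence norm `1`. Therefore
`‖φ x‖ = ‖φ p‖ ^ v(x)`, and everything is read off from the powers of `‖φ p‖`: the sequence `p ^ n`
leaves every compact subset of `ℚ_[p] \ {0}`, and conversely, when `‖φ p‖ ≤ 1`, the function
`1_{ℤ_p} · χ` is bounded by `‖φ p‖ ^ N` outside the compact annulus `p ^ (-N) ≤ ‖x‖ ≤ 1`.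
-/

open Filter Topology

theorem le_one_of_forall_pow_le {R : Type*} [Semiring R] [LinearOrder R] [IsStrictOrderedRing R]
    [Archimedean R] [ExistsAddOfLE R] {c B : R} (h : ∀ n : ℕ, c ^ n ≤ B) : c ≤ 1 := by
  by_contra! hc
  obtain ⟨n, hn⟩ := pow_unbounded_of_one_lt B hc
  exact (h n).not_gt hn

theorem exists_monoidWithZeroHom_eq_restrict {M N : Type*} [MonoidWithZero M] [NoZeroDivisors M]
    [Nontrivial M] [MonoidWithZero N] [IsLeftCancelMulZero N] (χ : {x : M // x ≠ 0} → N)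
    (hone : χ ⟨1, one_ne_zero⟩ ≠ 0)
    (hmul : ∀ (x y : M) (hx : x ≠ 0) (hy : y ≠ 0),
      χ ⟨x * y, mul_ne_zero hx hy⟩ = χ ⟨x, hx⟩ * χ ⟨y, hy⟩) :
    ∃ φ : M →*₀ N, χ = fun x => φ x.1 := by
  have hχ_one : χ ⟨1, one_ne_zero⟩ = 1 := by
    have h := hmul 1 1 one_ne_zero one_ne_zero
    simp only [mul_one] at h
    exact (mul_eq_left₀ hone).1 h.symm
  let φ : M →*₀ N :=
    { toFun := fun x => if hx : x ≠ 0 then χ ⟨x, hx⟩ else 0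
      map_zero' := by simp
      map_one' := by simp [hχ_one]
      map_mul' := fun x y => by
        by_cases hx : x = 0
        · simp [hx]
        by_cases hy : y = 0
        · simp [hy]
        simp [hx, hy, hmul] }
  refine ⟨φ, funext fun x => ?_⟩
  simp [φ, x.2]

theorem norm_map_eq_one_of_norm_eq_one {F K : Type*} [NormedDivisionRing F] [ProperSpace F]
    [NormedDivisionRing K] {φ : F →*₀ K} (hφ : ContinuousOn φ {0}ᶜ) {u : F} (hu : ‖u‖ = 1) :
    ‖φ u‖ = 1 := by
  have sphere_subset : Metric.sphere (0 : F) 1 ⊆ {0}ᶜ := fun x hx =>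
    Metric.ne_of_mem_sphere hx one_ne_zero
  obtain ⟨B, hB⟩ :=
    (isCompact_sphere (0 : F) 1).exists_bound_of_continuousOn (hφ.mono sphere_subset)
  have norm_map_le_one : ∀ v : F, ‖v‖ = 1 → ‖φ v‖ ≤ 1 := fun v hv =>
    le_one_of_forall_pow_le fun n => by
      rw [← norm_pow, ← map_pow]
      exact hB _ (by simp [hv])
  refine le_antisymm (norm_map_le_one u hu) ((inv_le_one₀ ?_).1 ?_)
  · exact norm_pos_iff.2 ((map_ne_zero φ).2 (norm_pos_iff.1 (hu ▸ one_pos)))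
  · simpa using norm_map_le_one u⁻¹ (by simp [hu])

theorem isCompact_setOf_norm_mem_Icc {E : Type*} [NormedAddCommGroup E] [ProperSpace E] {r : ℝ}
    (hr : 0 < r) (R : ℝ) : IsCompact {x : {x : E // x ≠ 0} | ‖x.1‖ ∈ Set.Icc r R} := by
  have hrange : {x : E | ‖x‖ ∈ Set.Icc r R} ⊆ Set.range (Subtype.val : {x : E // x ≠ 0} → E) :=
    fun x hx => ⟨⟨x, norm_pos_iff.1 (hr.trans_le hx.1)⟩, rfl⟩
  refine (IsEmbedding.subtypeVal.isCompact_preimage_iff hrange).2 ?_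
  refine Metric.isCompact_of_isClosed_isBounded (isClosed_Icc.preimage continuous_norm) ?_
  exact isBounded_iff_forall_norm_le.2 ⟨R, fun x hx => hx.2⟩

theorem tendsto_pow_cocompact_ne_zero {F : Type*} [NormedDivisionRing F] {a : F} (ha₀ : a ≠ 0)
    (ha : ‖a‖ < 1) :
    Tendsto (fun n : ℕ => (⟨a ^ n, pow_ne_zero n ha₀⟩ : {x : F // x ≠ 0})) atTop
      (cocompact _) := by
  have continuous_norm_inv : Continuous fun x : {x : F // x ≠ 0} => ‖x.1‖⁻¹ :=
    continuous_subtype_val.norm.inv₀ fun x => norm_ne_zero_iff.2 x.2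
  have tendsto_norm_inv : Tendsto (fun n : ℕ => ‖a ^ n‖⁻¹) atTop atTop := by
    simp only [norm_pow, ← inv_pow]
    exact tendsto_pow_atTop_atTop_of_one_lt ((one_lt_inv₀ (norm_pos_iff.2 ha₀)).2 ha)
  refine Tendsto.mono_right ?_ (comap_cocompact_le continuous_norm_inv)
  exact tendsto_comap_iff.2 (tendsto_norm_inv.mono_right atTop_le_cocompact)

section Padic

variable {p : ℕ} [Fact p.Prime] {K : Type*}

theorem norm_map_eq_zpow_valuation [NormedDivisionRing K] {φ : ℚ_[p] →*₀ K}
    (hφ : ContinuousOn φ {0}ᶜ) {x : ℚ_[p]} (hx : x ≠ 0) :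
    ‖φ x‖ = ‖φ p‖ ^ x.valuation := by
  have hp : (p : ℚ_[p]) ≠ 0 := (padicPrimeElt p).2
  have hunit : ‖x / (p : ℚ_[p]) ^ x.valuation‖ = 1 := by
    rw [norm_div, Padic.norm_p_zpow, ← Padic.norm_eq_zpow_neg_valuation hx,
      div_self (norm_ne_zero_iff.2 hx)]
  calc ‖φ x‖ = ‖φ (x / (p : ℚ_[p]) ^ x.valuation * (p : ℚ_[p]) ^ x.valuation)‖ := by
        rw [div_mul_cancel₀ x (zpow_ne_zero _ hp)]
    _ = ‖φ p‖ ^ x.valuation := by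
        rw [map_mul, norm_mul, norm_map_eq_one_of_norm_eq_one hφ hunit, one_mul, map_zpow₀,
          norm_zpow]

variable [NormedField K]

theorem indicatorMulChar_of_norm_le_one (χ : {x : ℚ_[p] // x ≠ 0} → K) {x : {x : ℚ_[p] // x ≠ 0}}
    (hx : ‖x.1‖ ≤ 1) : indicatorMulChar p χ x = χ x :=
  if_pos hx

theorem indicatorMulChar_of_one_lt_norm (χ : {x : ℚ_[p] // x ≠ 0} → K) {x : {x : ℚ_[p] // x ≠ 0}}
    (hx : 1 < ‖x.1‖) : indicatorMulChar p χ x = 0 :=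
  if_neg hx.not_ge

theorem continuous_indicatorMulChar {χ : {x : ℚ_[p] // x ≠ 0} → K} (hχ : Continuous χ) :
    Continuous (indicatorMulChar p χ) := by
  have hclopen : IsClopen {x : {x : ℚ_[p] // x ≠ 0} | ‖x.1‖ ≤ 1} := by
    simpa [Set.preimage] using
      (IsUltrametricDist.isClopen_closedBall (0 : ℚ_[p]) one_ne_zero).preimage
        (continuous_subtype_val (p := fun x : ℚ_[p] => x ≠ 0))
  exact hχ.if (by simp [hclopen.frontier_eq]) continuous_const

theorem norm_indicatorMulChar_p_pow (φ : ℚ_[p] →*₀ K) (n : ℕ) :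
    ‖indicatorMulChar p (fun x => φ x) ⟨(p : ℚ_[p]) ^ n, pow_ne_zero n (padicPrimeElt p).2⟩‖ =
      ‖φ p‖ ^ n := by
  have hpow : ‖(p : ℚ_[p]) ^ n‖ ≤ 1 := by
    simpa only [norm_pow] using pow_le_one₀ (norm_nonneg _) Padic.norm_p_lt_one.le
  rw [indicatorMulChar_of_norm_le_one _ hpow, map_pow, norm_pow]

variable {φ : ℚ_[p] →*₀ K}

theorem norm_indicatorMulChar_le_pow (hφ : ContinuousOn φ {0}ᶜ) (hp : ‖φ p‖ ≤ 1) {N : ℕ}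
    {x : {x : ℚ_[p] // x ≠ 0}} (hx : ‖x.1‖ ≤ (p : ℝ) ^ (-N : ℤ)) :
    ‖indicatorMulChar p (fun x => φ x) x‖ ≤ ‖φ p‖ ^ N := by
  have one_lt_p : (1 : ℝ) < p := mod_cast (Fact.out : p.Prime).one_lt
  have norm_le_one : ‖x.1‖ ≤ 1 := hx.trans (zpow_le_one_of_nonpos₀ one_lt_p.le (by simp))
  have le_valuation : (N : ℤ) ≤ x.1.valuation := by
    rwa [Padic.norm_eq_zpow_neg_valuation x.2, zpow_le_zpow_iff_right₀ one_lt_p,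
      neg_le_neg_iff] at hx
  have norm_pos : 0 < ‖φ p‖ := norm_pos_iff.2 ((map_ne_zero φ).2 (padicPrimeElt p).2)
  rw [indicatorMulChar_of_norm_le_one _ norm_le_one, norm_map_eq_zpow_valuation hφ x.2,
    ← zpow_natCast]
  exact zpow_le_zpow_right_of_le_one₀ norm_pos hp le_valuation

theorem exists_norm_indicatorMulChar_le_iff (hφ : ContinuousOn φ {0}ᶜ) :
    (∃ B : ℝ, ∀ x, ‖indicatorMulChar p (fun x => φ x) x‖ ≤ B) ↔ ‖φ p‖ ≤ 1 := by
  refine ⟨fun ⟨B, hB⟩ => le_one_of_forall_pow_le (B := B) fun n => ?_, fun hp => ⟨1, fun x => ?_⟩⟩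
  · exact norm_indicatorMulChar_p_pow φ n ▸ hB _
  · rcases le_or_gt ‖x.1‖ 1 with hx | hx
    · simpa using norm_indicatorMulChar_le_pow hφ hp (N := 0) (by simpa using hx)
    · simp [indicatorMulChar_of_one_lt_norm _ hx]

theorem tendsto_indicatorMulChar_cocompact_iff (hφ : ContinuousOn φ {0}ᶜ) :
    Tendsto (indicatorMulChar p fun x => φ x) (cocompact _) (𝓝 0) ↔ ‖φ p‖ < 1 := by
  refine ⟨fun h => ?_, fun hp => Metric.nhds_basis_closedBall.tendsto_right_iff.2 fun ε hε => ?_⟩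
  · have tendsto_norm_pow : Tendsto (fun n : ℕ => ‖φ p‖ ^ n) atTop (𝓝 0) := by
      simpa only [Function.comp_def, norm_indicatorMulChar_p_pow, norm_zero] using
        (h.comp (tendsto_pow_cocompact_ne_zero (a := (p : ℚ_[p])) (padicPrimeElt p).2
          Padic.norm_p_lt_one)).norm
    simpa using tendsto_pow_atTop_nhds_zero_iff.1 tendsto_norm_pow
  · obtain ⟨N, hN⟩ := exists_pow_lt_of_lt_one hε hp
    have p_pos : (0 : ℝ) < p := mod_cast (Fact.out : p.Prime).pos
    filter_upwards
      [(isCompact_setOf_norm_mem_Icc (zpow_pos p_pos (-N : ℤ)) 1).compl_mem_cocompact] with x hx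
    rw [mem_closedBall_zero_iff]
    rcases le_or_gt ‖x.1‖ 1 with hx_le | hx_gt
    · have norm_le : ‖x.1‖ ≤ (p : ℝ) ^ (-N : ℤ) := (not_le.1 fun h => hx ⟨h, hx_le⟩).le
      exact (norm_indicatorMulChar_le_pow hφ hp.le norm_le).trans hN.le
    · simp [indicatorMulChar_of_one_lt_norm _ hx_gt, hε.le]

end Padic

theorem indicatorMulChar_properties_general
    (p : ℕ) [Fact p.Prime] {K : Type*} [NormedField K]
    (χ : {x : ℚ_[p] // x ≠ 0} → K) (hne : ∀ x, χ x ≠ 0) (hcont : Continuous χ)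
    (hmul : ∀ (x y : ℚ_[p]) (hx : x ≠ 0) (hy : y ≠ 0),
      χ ⟨x * y, mul_ne_zero hx hy⟩ = χ ⟨x, hx⟩ * χ ⟨y, hy⟩) :
    (∀ u : {x : ℚ_[p] // x ≠ 0}, ‖u.1‖ = 1 → ‖χ u‖ = 1) ∧
    Continuous (indicatorMulChar p χ) ∧
    ((∃ B : ℝ, ∀ x, ‖indicatorMulChar p χ x‖ ≤ B) ↔ ‖χ (padicPrimeElt p)‖ ≤ 1) ∧
    ((∀ ε : ℝ, 0 < ε → ∃ C : Set {x : ℚ_[p] // x ≠ 0}, IsCompact C ∧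
        ∀ x ∉ C, ‖indicatorMulChar p χ x‖ ≤ ε) ↔ ‖χ (padicPrimeElt p)‖ < 1) := by
  obtain ⟨φ, rfl⟩ := exists_monoidWithZeroHom_eq_restrict χ (hne _) hmul
  have hφ : ContinuousOn φ {0}ᶜ := continuousOn_iff_continuous_domRestrict.2 hcont
  refine ⟨fun u hu => norm_map_eq_one_of_norm_eq_one hφ hu, continuous_indicatorMulChar hcont,
    exists_norm_indicatorMulChar_le_iff hφ,
    Iff.trans ?_ (tendsto_indicatorMulChar_cocompact_iff hφ)⟩
  simp [hasBasis_cocompact.tendsto_iff Metric.nhds_basis_closedBall]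

/-- Let `χ : ℚ_p \ {0} → K \ {0}` be a continuous multiplicative map into a
complete nonarchimedean normed field. Then `‖χ(u)‖ = 1` for units `u`, the function
`f = 1_{ℤ_p} · χ` is continuous, `f` is bounded iff `‖χ(p)‖ ≤ 1`, and `f` vanishes at
infinity iff `‖χ(p)‖ < 1`. -/
theorem indicatorMulChar_properties
    (p : ℕ) [Fact p.Prime] {K : Type*} [NormedField K] [CompleteSpace K]
    (hK : ∀ a b : K, ‖a + b‖ ≤ max ‖a‖ ‖b‖)
    (χ : {x : ℚ_[p] // x ≠ 0} → K) (hne : ∀ x, χ x ≠ 0) (hcont : Continuous χ)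
    (hmul : ∀ (x y : ℚ_[p]) (hx : x ≠ 0) (hy : y ≠ 0),
      χ ⟨x * y, mul_ne_zero hx hy⟩ = χ ⟨x, hx⟩ * χ ⟨y, hy⟩) :
    (∀ u : {x : ℚ_[p] // x ≠ 0}, ‖u.1‖ = 1 → ‖χ u‖ = 1) ∧
    Continuous (indicatorMulChar p χ) ∧
    ((∃ B : ℝ, ∀ x, ‖indicatorMulChar p χ x‖ ≤ B) ↔ ‖χ (padicPrimeElt p)‖ ≤ 1) ∧
    ((∀ ε : ℝ, 0 < ε → ∃ C : Set {x : ℚ_[p] // x ≠ 0}, IsCompact C ∧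
        ∀ x ∉ C, ‖indicatorMulChar p χ x‖ ≤ ε) ↔ ‖χ (padicPrimeElt p)‖ < 1) :=
  indicatorMulChar_properties_general p χ hne hcont hmul
end

section
/- Let p be a prime, K a nonarchimedean normed field of characteristic zero, α ∈ K with α ≠ 0, and m ≥ 1 an integer. Let X = ℤ_p \ {0} with the subspace topology, and define the operator U_p on K-valued functions on X by (U_p g)(x) = g(p·x). Let f : X → K be continuous with (U_p − α)^m f = 0, i.e. applying the map g ↦ U_p g − α·g to f a total of m times yields the zero function. Then there exist continuous functions f_1, …, f_m : ℤ_p^× → K such that for every integer k ≥ 0 and every u ∈ ℤ_p^×, f(p^k · u) = Σ_{i=1}^m f_i(u) · α^k · k^{i−1}. -/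
/-- `p` is nonzero in `ℤ_p`. -/
lemma padicInt_p_ne_zero (p : ℕ) [Fact p.Prime] : (p : ℤ_[p]) ≠ 0 := by
  exact_mod_cast (Fact.out : p.Prime).ne_zero

/-- The operator `U_p` on `K`-valued functions on `ℤ_p \ {0}`: `(U_p g)(x) = g (p • x)`. -/
noncomputable def UpOp (p : ℕ) [Fact p.Prime] {K : Type*} [NormedField K]
    (g : {x : ℤ_[p] // x ≠ 0} → K) : {x : ℤ_[p] // x ≠ 0} → K :=
  fun x => g ⟨(p : ℤ_[p]) * x.1, mul_ne_zero (padicInt_p_ne_zero p) x.2⟩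

/-- The element `p ^ k · u` of `ℤ_p \ {0}`, for `u ∈ ℤ_p^×`. -/
noncomputable def padicPowUnit (p : ℕ) [Fact p.Prime] (k : ℕ) (u : {u : ℤ_[p] // ‖u‖ = 1}) :
    {x : ℤ_[p] // x ≠ 0} :=
  ⟨(p : ℤ_[p]) ^ k * u.1,
    mul_ne_zero (pow_ne_zero k (padicInt_p_ne_zero p))
      (fun h => by have := u.2; rw [h, norm_zero] at this; exact one_ne_zero this.symm)⟩

/-!
The relation `f (p ^ k * u) = (U_p ^ k f) (u)` reduces the theorem to linear algebra for one
operator `T` on the space of continuous functions. Write `T = α + N` with `N ^ m v = 0`; the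
binomial theorem gives `T ^ k v = ∑_{j < m} (k choose j) α ^ (k - j) N ^ j v`, and each `k choose j`
is a polynomial in `k` of degree `j < m`, so collecting powers of `k` yields the coefficients `f_i`.
-/

section LinearAlgebra

theorem exists_natCast_choose_eq_sum_pow {K : Type*} [Field K] [CharZero K] {j m : ℕ}
    (hj : j < m) :
    ∃ a : Fin m → K, ∀ k : ℕ, (k.choose j : K) = ∑ i, a i * (k : K) ^ (i : ℕ) := by
  refine ⟨fun i => (descPochhammer K j).coeff i / (j.factorial : K), fun k => ?_⟩
  have hdeg : (descPochhammer K j).natDegree < m := by rwa [descPochhammer_natDegree]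
  rw [Nat.cast_choose_eq_descPochhammer_div, Polynomial.eval_eq_sum_range' hdeg,
    Finset.sum_range, Finset.sum_div]
  exact Finset.sum_congr rfl fun i _ => mul_div_right_comm _ _ _

theorem pow_apply_eq_sum_range_choose {R V : Type*} [CommRing R] [AddCommGroup V] [Module R V]
    (T : Module.End R V) (α : R) (k : ℕ) (v : V) :
    (T ^ k) v = ∑ j ∈ Finset.range (k + 1),
      (k.choose j * α ^ (k - j) : R) • ((T - α • 1) ^ j) v := by
  have hcomm : Commute (T - α • 1) (α • 1) := (Commute.one_right _).smul_right α
  conv_lhs => rw [← sub_add_cancel T (α • 1), hcomm.add_pow, LinearMap.sum_apply]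
  refine Finset.sum_congr rfl fun j _ => ?_
  rw [smul_pow, one_pow, mul_smul_one, ← nsmul_eq_mul', LinearMap.smul_apply,
    LinearMap.smul_apply, ← Nat.cast_smul_eq_nsmul R, smul_smul]

theorem pow_apply_eq_sum_choose_of_mem_genEigenspace {R V : Type*} [CommRing R] [AddCommGroup V]
    [Module R V] {T : Module.End R V} {α : R} {m : ℕ} {v : V} (hv : v ∈ T.genEigenspace α m)
    (k : ℕ) :
    (T ^ k) v = ∑ j : Fin m, (k.choose j * α ^ (k - j) : R) • ((T - α • 1) ^ (j : ℕ)) v := by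
  have hchoose (j : ℕ) (hj : k + 1 ≤ j) :
      (k.choose j * α ^ (k - j) : R) • ((T - α • 1) ^ j) v = 0 := by
    rw [Nat.choose_eq_zero_of_lt hj, Nat.cast_zero, zero_mul, zero_smul]
  have hnil (j : ℕ) (hj : m ≤ j) :
      (k.choose j * α ^ (k - j) : R) • ((T - α • 1) ^ j) v = 0 := by
    rw [Module.End.pow_map_zero_of_le hj (Module.End.mem_genEigenspace_nat.mp hv), smul_zero]
  rw [pow_apply_eq_sum_range_choose T α, ← Finset.sum_range
    fun j => (k.choose j * α ^ (k - j) : R) • ((T - α • 1) ^ j) v]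
  rcases le_total (k + 1) m with h | h
  · exact (Finset.eventually_constant_sum hchoose h).symm
  · exact Finset.eventually_constant_sum hnil h

theorem exists_pow_apply_eq_sum_of_mem_genEigenspace {K V : Type*} [Field K] [CharZero K]
    [AddCommGroup V] [Module K V] {T : Module.End K V} {α : K} (hα : α ≠ 0) {m : ℕ} {v : V}
    (hv : v ∈ T.genEigenspace α m) :
    ∃ c : Fin m → V, ∀ k : ℕ, (T ^ k) v = ∑ i : Fin m, (α ^ k * (k : K) ^ (i : ℕ)) • c i := by
  choose a ha using fun j : Fin m => exists_natCast_choose_eq_sum_pow (K := K) j.isLt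
  -- `α⁻¹ ^ j` absorbs the dependence of `α ^ (k - j)` on `j`.
  have hterm (k : ℕ) (j : Fin m) :
      (k.choose j * α ^ (k - j) : K) =
        ∑ i : Fin m, α ^ k * (k : K) ^ (i : ℕ) * (a j i * α⁻¹ ^ (j : ℕ)) := by
    have hpow : (k.choose j * α ^ (k - j) : K) = k.choose j * (α ^ k * α⁻¹ ^ (j : ℕ)) := by
      rcases le_or_gt (j : ℕ) k with hjk | hkj
      · rw [pow_sub₀ α hα hjk, inv_pow]
      · rw [Nat.choose_eq_zero_of_lt hkj, Nat.cast_zero, zero_mul, zero_mul]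
    rw [hpow, ha, Finset.sum_mul]
    exact Finset.sum_congr rfl fun i _ => by ring
  refine ⟨fun i => ∑ j, (a j i * α⁻¹ ^ (j : ℕ)) • ((T - α • 1) ^ (j : ℕ)) v, fun k => ?_⟩
  simp only [pow_apply_eq_sum_choose_of_mem_genEigenspace hv, hterm, Finset.sum_smul,
    Finset.smul_sum, smul_smul]
  exact Finset.sum_comm

end LinearAlgebra

section Koopman

variable {X : Type*} [TopologicalSpace X]

/-- The Koopman operator `g ↦ g ∘ φ` of a continuous self-map `φ`, as a linear endomorphism of the
continuous `E`-valued functions; for `φ` multiplication by `p` it is `U_p`. -/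
def koopman (R E : Type*) [Semiring R] [TopologicalSpace E] [AddCommMonoid E] [ContinuousAdd E]
    [Module R E] [ContinuousConstSMul R E] (φ : C(X, X)) : Module.End R C(X, E) where
  toFun g := g.comp φ
  map_add' _ _ := rfl
  map_smul' _ _ := rfl

variable {E : Type*} [TopologicalSpace E]

theorem koopman_pow_apply {R : Type*} [Semiring R] [AddCommMonoid E] [ContinuousAdd E] [Module R E]
    [ContinuousConstSMul R E] (φ : C(X, X)) (k : ℕ) (g : C(X, E)) (x : X) :
    (koopman R E φ ^ k) g x = g (φ^[k] x) := by
  induction k generalizing x with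
  | zero => rfl
  | succ k ih => rw [pow_succ', Function.iterate_succ_apply]; exact ih (φ x)

theorem coe_koopman_sub_smul_pow_apply {R : Type*} [CommRing R] [AddCommGroup E]
    [IsTopologicalAddGroup E] [Module R E] [ContinuousConstSMul R E] (φ : C(X, X)) (α : R) (n : ℕ)
    (g : C(X, E)) :
    ⇑(((koopman R E φ - α • 1) ^ n) g) = (fun h : X → E => h ∘ φ - α • h)^[n] g := by
  have hsemi : Function.Semiconj ((⇑) : C(X, E) → X → E)
      (koopman R E φ - α • 1 : Module.End R C(X, E)) (fun h => h ∘ φ - α • h) := fun _ => rfl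
  rw [Module.End.pow_apply]
  exact hsemi.iterate_right n g

theorem generalized_Up_eigenfunction_structure_general {K : Type*} [Field K] [CharZero K]
    [AddCommGroup E] [IsTopologicalAddGroup E] [Module K E] [ContinuousConstSMul K E]
    (φ : C(X, X)) {α : K} (hα : α ≠ 0) {m : ℕ} (f : C(X, E))
    (heig : (fun g : X → E => g ∘ φ - α • g)^[m] f = 0) :
    ∃ fs : Fin m → C(X, E), ∀ (k : ℕ) (x : X),
      f (φ^[k] x) = ∑ i : Fin m, (α ^ k * (k : K) ^ (i : ℕ)) • fs i x := by
  have hf : f ∈ (koopman K E φ).genEigenspace α m :=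
    Module.End.mem_genEigenspace_nat.mpr <| DFunLike.coe_injective <|
      (coe_koopman_sub_smul_pow_apply φ α m f).trans heig
  obtain ⟨fs, hfs⟩ := exists_pow_apply_eq_sum_of_mem_genEigenspace hα hf
  refine ⟨fs, fun k x => ?_⟩
  rw [← koopman_pow_apply (R := K), hfs, ContinuousMap.sum_apply]
  rfl

end Koopman

section PadicInt

variable (p : ℕ) [Fact p.Prime]

/-- Multiplication by `p` as a continuous self-map of `ℤ_p \ {0}`. By definition `UpOp p g` is
`g ∘ mulByP p`. -/
noncomputable def mulByP : C({x : ℤ_[p] // x ≠ 0}, {x : ℤ_[p] // x ≠ 0}) where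
  toFun x := ⟨p * x.1, mul_ne_zero (padicInt_p_ne_zero p) x.2⟩

theorem mulByP_iterate_padicPowUnit_zero (k : ℕ) (u : {u : ℤ_[p] // ‖u‖ = 1}) :
    (mulByP p)^[k] (padicPowUnit p 0 u) = padicPowUnit p k u := by
  induction k with
  | zero => rfl
  | succ k ih =>
    rw [Function.iterate_succ_apply', ih]
    exact Subtype.ext (by simp only [mulByP, padicPowUnit, ContinuousMap.coe_mk]; ring)

theorem continuous_padicPowUnit (k : ℕ) : Continuous (padicPowUnit p k) := by
  unfold padicPowUnit
  fun_prop

end PadicInt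

/-- A continuous function `f` on `ℤ_p \ {0}` killed by `(U_p − α) ^ m`
(with `α ≠ 0`) is of the form `f(p^k·u) = Σ_{i=1}^m f_i(u)·α^k·k^{i−1}` for continuous
functions `f_1, …, f_m` on `ℤ_p^×`. -/
theorem generalized_Up_eigenfunction_structure
    (p : ℕ) [Fact p.Prime] {K : Type*} [NormedField K] [CharZero K]
    (hK : ∀ a b : K, ‖a + b‖ ≤ max ‖a‖ ‖b‖)
    (α : K) (hα : α ≠ 0) (m : ℕ) (hm : 1 ≤ m)
    (f : {x : ℤ_[p] // x ≠ 0} → K) (hf : Continuous f)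
    (heig : (fun g : {x : ℤ_[p] // x ≠ 0} → K => UpOp p g - α • g)^[m] f = 0) :
    ∃ fs : Fin m → ({u : ℤ_[p] // ‖u‖ = 1} → K),
      (∀ i, Continuous (fs i)) ∧
      ∀ (k : ℕ) (u : {u : ℤ_[p] // ‖u‖ = 1}),
        f (padicPowUnit p k u) = ∑ i : Fin m, fs i u * α ^ k * (k : K) ^ (i : ℕ) := by
  obtain ⟨fs, hfs⟩ := generalized_Up_eigenfunction_structure_general (mulByP p) hα ⟨f, hf⟩ heig
  refine ⟨fun i u => fs i (padicPowUnit p 0 u),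
    fun i => (fs i).continuous.comp (continuous_padicPowUnit p 0), fun k u => ?_⟩
  rw [← mulByP_iterate_padicPowUnit_zero]
  exact (hfs k _).trans (Finset.sum_congr rfl fun i _ => by rw [smul_eq_mul]; ring)
end
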